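/- Let ρ be a d×d density matrix, ε ∈ (0,1], and R > 0. Suppose O_1, …, O_m are d×d Hermitian matrices, where each O_t = Σ_{j∈J_t} w_{t,j} |ψ^{t,j}⟩⟨ψ^{t,j}| for a finite index set J_t, orthonormal vectors {ψ^{t,j}}_{j∈J_t} ⊆ ℂ^d, and real weights satisfying Σ_{j∈J_t} |w_{t,j}| ≤ R. Let S_t be the linear span of all ψ^{r,j} with r < t, j ∈ J_r, and let P_t be the orthogonal projection onto S_t. If for every t ∈ {1, …, m} one has |tr(P_t O_t P_t ρ) − tr(O_t ρ)| > (3/16)ε, then m ≤ 1024 R²/(9 ε²). -/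

import Mathlib

open Matrix
open scoped ComplexOrder

theorem aux_psd {d : ℕ} (ρ : Matrix (Fin d) (Fin d) ℂ) (hρ : ρ.PosSemidef) :
    ∃ B : Matrix (Fin d) (Fin d) ℂ, ρ = Bᴴ * B := by
  open scoped MatrixOrder in
  obtain ⟨B, hB⟩ := CStarAlgebra.nonneg_iff_eq_star_mul_self.mp hρ.nonneg
  exact ⟨B, hB⟩

theorem aux_tr {d : ℕ} (ρ F : Matrix (Fin d) (Fin d) ℂ) (hρ : ρ.PosSemidef) (hF : F.PosSemidef) :
    0 ≤ (F * ρ).trace.re := by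
  obtain ⟨B, rfl⟩ := aux_psd ρ hρ
  have h := (hF.mul_mul_conjTranspose_same B).trace_nonneg
  rw [Matrix.trace_mul_comm, ← Matrix.mul_assoc, Matrix.trace_mul_comm] at h
  exact (Complex.le_def.1 h).1

theorem aux_trvec {d : ℕ} (ρ : Matrix (Fin d) (Fin d) ℂ) (x y : Fin d → ℂ) :
    (vecMulVec x (star y) * ρ).trace = star y ⬝ᵥ ρ *ᵥ x := by
  rw [vecMulVec_mul, trace_vecMulVec, dotProduct_mulVec, dotProduct_comm]

theorem aux_proj {d : ℕ} (ρ E : Matrix (Fin d) (Fin d) ℂ) (hρ : ρ.PosSemidef)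
    (hEH : E.IsHermitian) (hEE : E * E = E) (x : Fin d → ℂ) (hx : E *ᵥ x = x) (c : ℝ)
    (hc : star x ⬝ᵥ x = (c : ℂ)) (hc1 : c ≤ 1) :
    (star x ⬝ᵥ ρ *ᵥ x).re ≤ (E * ρ).trace.re := by
  set V := vecMulVec x (star x) with hV
  have hVp : V.PosSemidef := posSemidef_vecMulVec_self_star x
  have hEV : E * V = V := by rw [hV, mul_vecMulVec, hx]
  have hVE : V * E = V := by
    have := congrArg conjTranspose hEV
    rwa [conjTranspose_mul, hVp.1.eq, hEH.eq] at this
  have hVV : V * V = (c : ℂ) • V := by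
    rw [hV, vecMulVec_mul_vecMulVec, hc, vecMulVec_smul]
  have hF : (E - V).PosSemidef := by
    have h1 : E - V = (E - V)ᴴ * (E - V) + ((1 - c : ℝ) : ℂ) • V := by
      rw [conjTranspose_sub, hVp.1.eq, hEH.eq, sub_mul, mul_sub, mul_sub, hEE, hEV, hVE, hVV]
      push_cast
      module
    rw [h1]
    refine (posSemidef_conjTranspose_mul_self _).add (hVp.smul ?_)
    exact_mod_cast sub_nonneg.2 hc1
  have := aux_tr ρ (E - V) hρ hF
  rw [sub_mul, trace_sub, aux_trvec, Complex.sub_re] at this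
  linarith

theorem aux_cs {d : ℕ} (ρ : Matrix (Fin d) (Fin d) ℂ) (hρ : ρ.PosSemidef) (x y : Fin d → ℂ)
    (a b : ℝ) (ha : (star x ⬝ᵥ ρ *ᵥ x).re ≤ a) (hb : (star y ⬝ᵥ ρ *ᵥ y).re ≤ b) :
    ‖star x ⬝ᵥ ρ *ᵥ y‖ ≤ √a * √b := by
  obtain ⟨B, rfl⟩ := aux_psd ρ hρ
  have key : ∀ u v : Fin d → ℂ, star u ⬝ᵥ (Bᴴ * B) *ᵥ v
      = inner ℂ (WithLp.toLp 2 (B *ᵥ u)) (WithLp.toLp 2 (B *ᵥ v)) := by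
    intro u v
    rw [EuclideanSpace.inner_eq_star_dotProduct, ← mulVec_mulVec, dotProduct_mulVec,
      vecMul_conjTranspose, star_star, dotProduct_comm]
  have hn : ∀ u : Fin d → ℂ, ∀ a : ℝ, (star u ⬝ᵥ (Bᴴ * B) *ᵥ u).re ≤ a →
      ‖WithLp.toLp 2 (B *ᵥ u)‖ ≤ √a := by
    intro u a h
    rw [key, ← RCLike.re_eq_complex_re, inner_self_eq_norm_sq] at h
    exact Real.le_sqrt_of_sq_le h
  rw [key]
  exact (norm_inner_le_norm _ _).trans (mul_le_mul (hn x a ha) (hn y b hb) (norm_nonneg _) (Real.sqrt_nonneg _))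

theorem aux_norm {d : ℕ} (E : Matrix (Fin d) (Fin d) ℂ)
    (hEH : E.IsHermitian) (hEE : E * E = E) (x : Fin d → ℂ) (hx : star x ⬝ᵥ x = 1) :
    ∃ c : ℝ, star (E *ᵥ x) ⬝ᵥ (E *ᵥ x) = (c : ℂ) ∧ c ≤ 1 := by
  have h1 : star (E *ᵥ x) ⬝ᵥ (E *ᵥ x) = star x ⬝ᵥ E *ᵥ x := by
    rw [star_mulVec, hEH.eq, ← dotProduct_mulVec, mulVec_mulVec, hEE]
  have h2 : star ((1 - E) *ᵥ x) ⬝ᵥ ((1 - E) *ᵥ x) = 1 - star x ⬝ᵥ E *ᵥ x := by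
    rw [sub_mulVec, one_mulVec, star_sub, sub_dotProduct, dotProduct_sub, dotProduct_sub, h1, hx,
      star_mulVec, hEH.eq, ← dotProduct_mulVec]
    ring
  have p1 := dotProduct_star_self_nonneg (E *ᵥ x)
  have p2 := dotProduct_star_self_nonneg ((1 - E) *ᵥ x)
  rw [h2] at p2
  refine ⟨(star (E *ᵥ x) ⬝ᵥ (E *ᵥ x)).re, ?_, ?_⟩
  · have := (Complex.le_def.1 p1).2
    apply Complex.ext
    · simp
    · simpa using this.symm
  · have := (Complex.le_def.1 p2).1
    rw [h1]
    simp at this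
    linarith

/-- per-vector deviation -/
theorem aux_vec {d : ℕ} (ρ P P' : Matrix (Fin d) (Fin d) ℂ) (hρ : ρ.PosSemidef)
    (hρtr : ρ.trace = 1) (hPH : P.IsHermitian) (hPP : P * P = P)
    (hPH' : P'.IsHermitian) (hPP' : P' * P' = P') (hP'P : P' * P = P)
    (x : Fin d → ℂ) (hx : star x ⬝ᵥ x = 1) (hP'x : P' *ᵥ x = x) :
    ‖(P * vecMulVec x (star x) * P * ρ).trace - (vecMulVec x (star x) * ρ).trace‖
      ≤ 2 * √((P' * ρ).trace.re - (P * ρ).trace.re) := by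
  have hPP'2 : P * P' = P := by
    have := congrArg conjTranspose hP'P
    rwa [conjTranspose_mul, hPH.eq, hPH'.eq] at this
  have e1 : P * vecMulVec x (star x) * P = vecMulVec (P *ᵥ x) (star (P *ᵥ x)) := by
    rw [mul_vecMulVec, vecMulVec_mul, star_mulVec, hPH.eq]
  have hE : (P' - P) * (P' - P) = P' - P := by
    rw [sub_mul, mul_sub, mul_sub, hPP', hP'P, hPP'2, hPP]; abel
  have hEH : (P' - P).IsHermitian := hPH'.sub hPH
  set z := (P' - P) *ᵥ x with hz
  have hzx : z = x - P *ᵥ x := by rw [hz, sub_mulVec, hP'x]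
  obtain ⟨c, hc, hc1⟩ := aux_norm _ hEH hE x hx
  obtain ⟨c', hc', hc1'⟩ := aux_norm _ hPH hPP x hx
  have bz := aux_proj ρ (P' - P) hρ hEH hE z (by rw [hz, mulVec_mulVec, hE]) c hc hc1
  rw [sub_mul, trace_sub, Complex.sub_re] at bz
  have bx := aux_proj ρ 1 hρ isHermitian_one (by simp) x (by simp) 1 (by simpa using hx) le_rfl
  have bp := aux_proj ρ 1 hρ isHermitian_one (by simp) (P *ᵥ x) (by simp) c' hc' hc1'
  rw [one_mul, hρtr, Complex.one_re] at bx bp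
  have t1 := aux_cs ρ hρ z x _ _ bz bx
  have t2 := aux_cs ρ hρ (P *ᵥ x) z _ _ bp bz
  rw [e1, aux_trvec, aux_trvec]
  have e2 : star (P *ᵥ x) ⬝ᵥ ρ *ᵥ (P *ᵥ x) - star x ⬝ᵥ ρ *ᵥ x
      = -(star z ⬝ᵥ ρ *ᵥ x + star (P *ᵥ x) ⬝ᵥ ρ *ᵥ z) := by
    rw [hzx, star_sub, sub_dotProduct, mulVec_sub, dotProduct_sub]; ring
  rw [e2, norm_neg]
  refine (norm_add_le _ _).trans ?_
  rw [Real.sqrt_one] at t1 t2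
  linarith

/-- **mistake bound for low-rank observables.**
Let `ρ` be a `d × d` density matrix, `ε ∈ (0,1]`, `R > 0`.  Suppose the observables
`O t = ∑_{j ∈ J t} w t j • |ψ t j⟩⟨ψ t j|` (for `t = 1, …, m`) are built from orthonormal
families of eigenvectors with real weights satisfying `∑_{j ∈ J t} |w t j| ≤ R`.  Let `S t` be
the span of all eigenvectors appearing in earlier rounds, and `P t` the orthogonal projection
onto `S t` (a Hermitian idempotent with range in `S t` fixing `S t` pointwise).  If
`|tr(P t * O t * P t * ρ) - tr(O t * ρ)| > (3/16) ε` for every `t`, then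
`m ≤ 1024 R² / (9 ε²)`. -/
theorem stmt_13 {d m : ℕ} {ι : Type*} [DecidableEq ι]
    (ρ : Matrix (Fin d) (Fin d) ℂ) (hρ : ρ.PosSemidef) (hρtr : ρ.trace = 1)
    (ε R : ℝ) (hε0 : 0 < ε) (hε1 : ε ≤ 1) (hR : 0 < R)
    (J : Fin m → Finset ι)
    (ψ : Fin m → ι → (Fin d → ℂ)) (w : Fin m → ι → ℝ)
    (hortho : ∀ t, ∀ i ∈ J t, ∀ j ∈ J t,
      star (ψ t i) ⬝ᵥ ψ t j = if i = j then 1 else 0)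
    (hwR : ∀ t, ∑ j ∈ J t, |w t j| ≤ R)
    (O : Fin m → Matrix (Fin d) (Fin d) ℂ)
    (hO : ∀ t, O t = ∑ j ∈ J t, (w t j : ℂ) • Matrix.vecMulVec (ψ t j) (star (ψ t j)))
    (P : Fin m → Matrix (Fin d) (Fin d) ℂ)
    (hPH : ∀ t, (P t).IsHermitian) (hPP : ∀ t, P t * P t = P t)
    (hPmem : ∀ t v, P t *ᵥ v ∈
      Submodule.span ℂ {x | ∃ r : Fin m, ∃ j ∈ J r, r < t ∧ x = ψ r j})
    (hPfix : ∀ t, ∀ v ∈ Submodule.span ℂ {x | ∃ r : Fin m, ∃ j ∈ J r, r < t ∧ x = ψ r j},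
      P t *ᵥ v = v)
    (hdev : ∀ t, 3 / 16 * ε <
      ‖(P t * O t * P t * ρ).trace - (O t * ρ).trace‖) :
    (m : ℝ) ≤ 1024 * R ^ 2 / (9 * ε ^ 2) := by
  let P' : ℕ → Matrix (Fin d) (Fin d) ℂ := fun k => if h : k < m then P ⟨k, h⟩ else 1
  have P'lt : ∀ t : Fin m, P' t = P t := fun t => by simp [P']
  have P'ge : ∀ k, ¬ k < m → P' k = 1 := fun k h => by simp [P', h]
  have hH : ∀ k, (P' k).IsHermitian := by
    intro k
    by_cases h : k < m
    · rw [P'lt ⟨k, h⟩]; exact hPH _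
    · rw [P'ge k h]; exact isHermitian_one
  have hI : ∀ k, P' k * P' k = P' k := by
    intro k
    by_cases h : k < m
    · rw [P'lt ⟨k, h⟩]; exact hPP _
    · rw [P'ge k h]; simp
  have hfix : ∀ t : Fin m, ∀ j ∈ J t, P' (t + 1) *ᵥ ψ t j = ψ t j := by
    intro t j hj
    by_cases h : (t : ℕ) + 1 < m
    · rw [P'lt ⟨t + 1, h⟩]
      exact hPfix _ _ (Submodule.subset_span ⟨t, j, hj, by simp [Fin.lt_def], rfl⟩)
    · rw [P'ge _ h, one_mulVec]
  have hmono : ∀ t : Fin m, P' (t + 1) * P t = P t := by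
    intro t
    by_cases h : (t : ℕ) + 1 < m
    · rw [P'lt ⟨t + 1, h⟩]
      apply Matrix.ext_of_mulVec_single
      intro i
      rw [← mulVec_mulVec]
      refine hPfix _ _ (Submodule.span_mono ?_ (hPmem t _))
      rintro x ⟨r, j, hj, hr, rfl⟩
      exact ⟨r, j, hj, hr.trans (by simp [Fin.lt_def]), rfl⟩
    · rw [P'ge _ h, one_mul]
  let p : ℕ → ℝ := fun k => (P' k * ρ).trace.re
  have hnn : ∀ E : Matrix (Fin d) (Fin d) ℂ, E.IsHermitian → E * E = E → 0 ≤ (E * ρ).trace.re := by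
    intro E h1 h2
    apply aux_tr ρ E hρ
    have := posSemidef_conjTranspose_mul_self E
    rwa [h1.eq, h2] at this
  have hstep : ∀ t : Fin m, (3 / 16 * ε) ^ 2 ≤ 4 * R ^ 2 * (p (t + 1) - p t) := by
    intro t
    have hΔ : 0 ≤ p (t + 1) - p t := by
      have hPP'2 : P t * P' (t + 1) = P t := by
        have := congrArg conjTranspose (hmono t)
        rwa [conjTranspose_mul, (hPH t).eq, (hH _).eq] at this
      have := hnn (P' (t + 1) - P t) ((hH _).sub (hPH t)) (by
        rw [sub_mul, mul_sub, mul_sub, hI, hmono, hPP'2, hPP]; abel)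
      rw [sub_mul, trace_sub, Complex.sub_re] at this
      simpa [p, P'lt] using this
    have hb : ‖(P t * O t * P t * ρ).trace - (O t * ρ).trace‖ ≤ R * (2 * √(p (t + 1) - p t)) := by
      have e : (P t * O t * P t * ρ).trace - (O t * ρ).trace
          = ∑ j ∈ J t, (w t j : ℂ) * ((P t * vecMulVec (ψ t j) (star (ψ t j)) * P t * ρ).trace
            - (vecMulVec (ψ t j) (star (ψ t j)) * ρ).trace) := by
        rw [hO t]
        simp only [Matrix.mul_sum, Matrix.sum_mul, Matrix.trace_sum, Matrix.mul_smul,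
          Matrix.smul_mul, Matrix.trace_smul, smul_eq_mul, mul_sub, Finset.sum_sub_distrib]
      rw [e]
      calc _ ≤ ∑ j ∈ J t, |w t j| * (2 * √(p (t + 1) - p t)) := by
            refine norm_sum_le_of_le _ fun j hj => ?_
            rw [norm_mul, Complex.norm_real, Real.norm_eq_abs]
            refine mul_le_mul_of_nonneg_left ?_ (abs_nonneg _)
            have := aux_vec ρ (P t) (P' (t + 1)) hρ hρtr (hPH t) (hPP t) (hH _) (hI _) (hmono t)
              (ψ t j) (by simpa using hortho t j hj j hj) (hfix t j hj)
            simpa only [p, P'lt] using this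
        _ ≤ _ := by
            rw [← Finset.sum_mul]
            exact mul_le_mul_of_nonneg_right (hwR t) (by positivity)
    have h3 := (hdev t).le.trans hb
    calc (3 / 16 * ε) ^ 2 ≤ (R * (2 * √(p (t + 1) - p t))) ^ 2 :=
          pow_le_pow_left₀ (by positivity) h3 2
      _ = 4 * R ^ 2 * (p (t + 1) - p t) := by
          rw [mul_pow, mul_pow, Real.sq_sqrt hΔ]; ring
  have hsum : (m : ℝ) * (3 / 16 * ε) ^ 2 ≤ 4 * R ^ 2 * (p m - p 0) := by
    have h := Finset.sum_le_sum (fun t (_ : t ∈ (Finset.univ : Finset (Fin m))) => hstep t)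
    rw [← Finset.mul_sum, Fin.sum_univ_eq_sum_range (fun k => p (k + 1) - p k),
      Finset.sum_range_sub] at h
    simpa using h
  have hpm : p m = 1 := by
    simp [p, P'ge m (lt_irrefl m), hρtr]
  have hp0 : 0 ≤ p 0 := hnn _ (hH 0) (hI 0)
  rw [le_div_iff₀ (by positivity)]
  have : 4 * R ^ 2 * (p m - p 0) ≤ 4 * R ^ 2 * 1 :=
    mul_le_mul_of_nonneg_left (by linarith) (by positivity)
  nlinarith
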